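/- Let G be a group and S a finite generating normal subset of G with 1 ∈ S (normal meaning gSg⁻¹ = S for all g ∈ G), such that |S⁻¹S| ≤ 2|S| − 2 and S⁻¹S ≠ G. Then any atom H of S containing 1 is (the underlying set of) a subgroup of G satisfying H(S⁻¹S) = S⁻¹S. -/

import Mathlib

open Pointwise

variable {G : Type*} [Group G] [DecidableEq G]

/-- `X` belongs to the family `F(S)`: `X` is nonempty and `XS` is a (finite)
proper subset of `G`. -/
def MemFam (S X : Finset G) : Prop :=
  X.Nonempty ∧ (↑(X * S) : Set G) ≠ Set.univ

/-- `X` is a fragment of `S`: a member of `F(S)` attaining the minimum of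
`|XS| - |X|`. -/
def IsFragment (S X : Finset G) : Prop :=
  MemFam S X ∧ ∀ Y : Finset G, MemFam S Y →
    (X * S).card - X.card ≤ (Y * S).card - Y.card

/-- `X` is an atom of `S`: a fragment of smallest cardinality. -/
def IsAtomOf (S X : Finset G) : Prop :=
  IsFragment S X ∧ ∀ Y : Finset G, IsFragment S Y → X.card ≤ Y.card

lemma aux_transfer {G : Type*} [Group G] [DecidableEq G] {S X Y : Finset G} (hX : IsAtomOf S X)
    (hY : MemFam S Y) (h1 : (Y * S).card = (X * S).card) (h2 : Y.card = X.card) :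
    IsAtomOf S Y := by
  refine ⟨⟨hY, fun Z hZ => ?_⟩, fun Z hZ => ?_⟩
  · rw [h1, h2]; exact hX.1.2 Z hZ
  · rw [h2]; exact hX.2 Z hZ

lemma aux_left {G : Type*} [Group G] [DecidableEq G] {S X : Finset G} (hX : IsAtomOf S X)
    (g : G) : IsAtomOf S (g • X) := by
  have e : (g • X) * S = g • (X * S) := smul_mul_assoc g X S
  refine aux_transfer hX ⟨hX.1.1.1.smul_finset, ?_⟩ ?_ ?_
  · rw [e]
    intro h
    apply hX.1.1.2
    rw [Set.eq_univ_iff_forall] at h ⊢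
    intro x
    have := h (g * x)
    rw [Finset.mem_coe, ← smul_eq_mul g x, Finset.smul_mem_smul_finset_iff] at this
    exact this
  · rw [e, Finset.card_smul_finset]
  · rw [Finset.card_smul_finset]

lemma aux_right {G : Type*} [Group G] [DecidableEq G] {S X : Finset G}
    (hnormal : ∀ g x : G, g * x * g⁻¹ ∈ S ↔ x ∈ S) (hX : IsAtomOf S X)
    (g : G) : IsAtomOf S (MulOpposite.op g • X) := by
  have e : (MulOpposite.op g • X) * S = MulOpposite.op g • (X * S) := by
    ext z
    simp only [Finset.mem_mul, Finset.mem_smul_finset, MulOpposite.smul_eq_mul_unop,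
      MulOpposite.unop_op]
    constructor
    · rintro ⟨_, ⟨x, hx, rfl⟩, s, hs, rfl⟩
      exact ⟨x * (g * s * g⁻¹), ⟨x, hx, _, (hnormal g s).2 hs, rfl⟩, by group⟩
    · rintro ⟨_, ⟨x, hx, s, hs, rfl⟩, rfl⟩
      exact ⟨x * g, ⟨x, hx, rfl⟩, g⁻¹ * s * g⁻¹⁻¹, (hnormal g⁻¹ s).2 hs, by group⟩
  refine aux_transfer hX ⟨hX.1.1.1.smul_finset, ?_⟩ ?_ ?_
  · rw [e]
    intro h
    apply hX.1.1.2
    rw [Set.eq_univ_iff_forall] at h ⊢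
    intro x
    have := h (x * g)
    rw [Finset.mem_coe, ← op_smul_eq_mul (a := g) (b := x), Finset.smul_mem_smul_finset_iff] at this
    exact this
  · rw [e, Finset.card_smul_finset]
  · rw [Finset.card_smul_finset]

lemma aux_cover {G : Type*} [Group G] [DecidableEq G] (P S : Finset G) (u : G)
    (h : (P \ S).card + ((MulOpposite.op u • P) \ S).card < P.card) : u ∈ S⁻¹ * S := by
  by_contra hu
  have hsub : P ⊆ (P \ S) ∪ MulOpposite.op u⁻¹ • ((MulOpposite.op u • P) \ S) := by
    intro y hy
    rw [Finset.mem_union]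
    by_cases hyS : y ∈ S
    · right
      rw [Finset.mem_smul_finset]
      refine ⟨y * u, ?_, by simp⟩
      rw [Finset.mem_sdiff]
      refine ⟨Finset.mem_smul_finset.2 ⟨y, hy, by simp⟩, fun hyu => hu ?_⟩
      exact Finset.mem_mul.2 ⟨y⁻¹, Finset.inv_mem_inv hyS, y * u, hyu, by group⟩
    · left
      exact Finset.mem_sdiff.2 ⟨hy, hyS⟩
  have := (Finset.card_le_card hsub).trans (Finset.card_union_le _ _)
  rw [Finset.card_smul_finset] at this
  omega

lemma aux_dual {G : Type*} [Group G] [DecidableEq G] [Fintype G] {S A : Finset G} (h1 : (1 : G) ∈ S)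
    (hnormal : ∀ g x : G, g * x * g⁻¹ ∈ S ↔ x ∈ S)
    (hA : IsAtomOf S A) : A.card ≤ Fintype.card G - (A * S).card := by
  have hsub : ∀ X : Finset G, X.card ≤ (X * S).card := fun X =>
    Finset.card_le_card (Finset.subset_mul_left X h1)
  have hdisj : ((A * S)ᶜ)⁻¹ * S ⊆ (Aᶜ)⁻¹ := by
    intro z hz
    obtain ⟨y, hy, s, hs, rfl⟩ := Finset.mem_mul.1 hz
    rw [Finset.mem_inv', Finset.mem_compl] at hy ⊢
    intro ha
    apply hy
    refine Finset.mem_mul.2 ⟨_, ha, y * s * y⁻¹, (hnormal y s).2 hs, by group⟩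
  have c1 := Finset.card_le_card hdisj
  rw [Finset.card_inv, Finset.card_compl] at c1
  have c2 : (((A * S)ᶜ)⁻¹ : Finset G).card = Fintype.card G - (A * S).card := by
    rw [Finset.card_inv, Finset.card_compl]
  have c3 : (A * S).card ≤ Fintype.card G := Finset.card_le_univ _
  have c4 : (A * S).card ≠ Fintype.card G := fun h => hA.1.1.2 (by
    rw [Finset.card_eq_iff_eq_univ] at h; rw [h]; simp)
  have c5 := hsub A
  have c6 : 0 < A.card := hA.1.1.1.card_pos
  have hmem : MemFam S ((A * S)ᶜ)⁻¹ := by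
    refine ⟨Finset.card_pos.1 (by omega), fun h => ?_⟩
    have : ((A * S)ᶜ)⁻¹ * S = Finset.univ := by
      exact_mod_cast h
    rw [this, Finset.card_univ] at c1
    omega
  rw [← c2]
  refine hA.2 _ ⟨hmem, fun Y hY => ?_⟩
  have := hA.1.2 Y hY
  omega

lemma aux_inter {G : Type*} [Group G] [DecidableEq G] {S A B : Finset G} (h1 : (1 : G) ∈ S)
    (hnormal : ∀ g x : G, g * x * g⁻¹ ∈ S ↔ x ∈ S)
    (hA : IsAtomOf S A) (hB : IsAtomOf S B) (hAB : (A ∩ B).Nonempty) : A = B := by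
  have hsub : ∀ X : Finset G, X.card ≤ (X * S).card := fun X =>
    Finset.card_le_card (Finset.subset_mul_left X h1)
  have hI : MemFam S (A ∩ B) := by
    refine ⟨hAB, fun h => hA.1.1.2 ?_⟩
    rw [Set.eq_univ_iff_forall] at h ⊢
    intro x
    exact Finset.mul_subset_mul_right Finset.inter_subset_left (h x)
  have k1 := hA.1.2 B hB.1.1
  have k2 := hB.1.2 A hA.1.1
  have k3 := hA.2 B hB.1
  have k4 := hB.2 A hA.1
  have k5 := hA.1.2 _ hI
  have e1 := Finset.card_union_add_card_inter A B
  have e2 := Finset.card_union_add_card_inter (A * S) (B * S)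
  have e3 : ((A ∩ B) * S).card ≤ ((A * S) ∩ (B * S)).card :=
    Finset.card_le_card Finset.inter_mul_subset
  have e4 : (A ∪ B) * S = (A * S) ∪ (B * S) := Finset.union_mul
  have e5 := hAB.card_pos
  have s1 := hsub A
  have s2 := hsub B
  have s3 := hsub (A ∩ B)
  have s4 := hsub (A ∪ B)
  rw [← e4] at e2
  have hU : MemFam S (A ∪ B) := by
    refine ⟨hA.1.1.1.mono Finset.subset_union_left, fun h => ?_⟩
    have hfin : Finite G := by
      rw [← Set.finite_univ_iff, ← h]; exact Finset.finite_toSet _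
    have := Fintype.ofFinite G
    have hd := aux_dual h1 hnormal hA
    have hu : (A ∪ B) * S = Finset.univ := by exact_mod_cast h
    rw [hu, Finset.card_univ] at e2
    have := Finset.card_le_univ (A * S)
    have := hA.1.1.1.card_pos
    omega
  have k6 := hA.1.2 _ hU
  have hfrag : IsFragment S (A ∩ B) := by
    refine ⟨hI, fun Y hY => ?_⟩
    have := hA.1.2 Y hY
    omega
  have k7 := hA.2 _ hfrag
  have a1 : A ∩ B = A := Finset.eq_of_subset_of_card_le Finset.inter_subset_left k7
  have a2 : A ⊆ B := by rw [← a1]; exact Finset.inter_subset_right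
  exact Finset.eq_of_subset_of_card_le a2 k4

theorem stmt_12 {G : Type*} [Group G] [DecidableEq G] (S : Finset G)
    (h1 : (1 : G) ∈ S) (hgen : Subgroup.closure (S : Set G) = ⊤)
    (hnormal : ∀ g x : G, g * x * g⁻¹ ∈ S ↔ x ∈ S)
    (hcard : (S⁻¹ * S).card ≤ 2 * S.card - 2)
    (hne : (↑(S⁻¹ * S) : Set G) ≠ Set.univ)
    (H : Finset G) (hH : IsAtomOf S H) (h1H : (1 : G) ∈ H) :
    H⁻¹ * H = H ∧ H * (S⁻¹ * S) = S⁻¹ * S := by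
  have hleft : ∀ x ∈ H, x⁻¹ • H = H := by
    intro x hx
    refine aux_inter h1 hnormal (aux_left hH _) hH ⟨1, Finset.mem_inter.2 ⟨?_, h1H⟩⟩
    exact Finset.mem_smul_finset.2 ⟨x, hx, by simp⟩
  have hdiv : ∀ x ∈ H, ∀ y ∈ H, x⁻¹ * y ∈ H := by
    intro x hx y hy
    rw [← hleft x hx]
    exact Finset.mem_smul_finset.2 ⟨y, hy, rfl⟩
  have hinv : ∀ x ∈ H, x⁻¹ ∈ H := fun x hx => by simpa using hdiv x hx 1 h1H
  have hmul : ∀ x ∈ H, ∀ y ∈ H, x * y ∈ H := fun x hx y hy => by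
    simpa using hdiv x⁻¹ (hinv x hx) y hy
  have hlr : ∀ g : G, g • H = MulOpposite.op g • H := by
    intro g
    refine aux_inter h1 hnormal (aux_left hH _) (aux_right hnormal hH _)
      ⟨g, Finset.mem_inter.2 ⟨?_, ?_⟩⟩
    · exact Finset.mem_smul_finset.2 ⟨1, h1H, by simp⟩
    · exact Finset.mem_smul_finset.2 ⟨1, h1H, by simp⟩
  have hconj : ∀ g : G, ∀ x ∈ H, g * x * g⁻¹ ∈ H := by
    intro g x hx
    have : g * x ∈ MulOpposite.op g • H := by
      rw [← hlr]; exact Finset.mem_smul_finset.2 ⟨x, hx, rfl⟩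
    obtain ⟨y, hy, he⟩ := Finset.mem_smul_finset.1 this
    rw [op_smul_eq_mul] at he
    rw [← he]; simpa using hy
  have hcos : ∀ s t : G, s * t⁻¹ ∈ H → MulOpposite.op s • H = MulOpposite.op t • H := by
    have key : ∀ s t : G, s * t⁻¹ ∈ H → MulOpposite.op s • H ⊆ MulOpposite.op t • H := by
      intro s t h z hz
      obtain ⟨y, hy, rfl⟩ := Finset.mem_smul_finset.1 hz
      exact Finset.mem_smul_finset.2 ⟨y * (s * t⁻¹), hmul _ hy _ h, by simp [mul_assoc]⟩
    intro s t h
    refine (key s t h).antisymm (key t s ?_)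
    simpa using hinv _ h
  have hHc := hH.1.1.1.card_pos
  have hsub : ∀ X : Finset G, X.card ≤ (X * S).card := fun X =>
    Finset.card_le_card (Finset.subset_mul_left X h1)
  -- bound
  have hbound : (H * S).card + 2 ≤ S.card + H.card := by
    have hm : MemFam S S⁻¹ := ⟨⟨1⁻¹, Finset.inv_mem_inv h1⟩, hne⟩
    have := hH.1.2 _ hm
    rw [Finset.card_inv] at this
    have := hsub H
    have h3 := hsub S⁻¹
    rw [Finset.card_inv] at h3
    have : 0 < S.card := Finset.card_pos.2 ⟨1, h1⟩
    omega
  have hpair : ∀ s ∈ S, ∀ t ∈ S, s * t⁻¹ ∉ H →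
      ((MulOpposite.op s • H) \ S).card + ((MulOpposite.op t • H) \ S).card + 2 ≤ H.card := by
    intro s hs t ht hst
    have hd : Disjoint ((MulOpposite.op s • H) \ S) ((MulOpposite.op t • H) \ S) := by
      rw [Finset.disjoint_left]
      intro z hz hz'
      obtain ⟨x, hx, rfl⟩ := Finset.mem_smul_finset.1 (Finset.mem_sdiff.1 hz).1
      obtain ⟨y, hy, he⟩ := Finset.mem_smul_finset.1 (Finset.mem_sdiff.1 hz').1
      rw [op_smul_eq_mul, op_smul_eq_mul] at he
      apply hst
      have : s * t⁻¹ = x⁻¹ * y := by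
        rw [eq_inv_mul_iff_mul_eq, ← mul_assoc, ← he]; group
      rw [this]; exact hdiv x hx y hy
    have hss : ∀ s ∈ S, (MulOpposite.op s • H) \ S ⊆ (H * S) \ S := by
      intro s hs
      apply Finset.sdiff_subset_sdiff _ le_rfl
      intro z hz
      obtain ⟨x, hx, rfl⟩ := Finset.mem_smul_finset.1 hz
      exact Finset.mem_mul.2 ⟨x, hx, s, hs, rfl⟩
    have c0 := Finset.card_le_card (Finset.subset_mul_right S h1H)
    have c := Finset.card_le_card (Finset.union_subset (hss s hs) (hss t ht))
    rw [Finset.card_union_of_disjoint hd,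
      Finset.card_sdiff_of_subset (Finset.subset_mul_right S h1H)] at c
    omega
  obtain ⟨r, hr, hrH⟩ : ∃ r ∈ S, r ∉ H := by
    by_contra hcon
    push Not at hcon
    let K : Subgroup G :=
      { carrier := H, one_mem' := h1H, mul_mem' := fun {a b} ha hb => hmul a ha b hb,
        inv_mem' := fun {a} ha => hinv a ha }
    have hK : Subgroup.closure (S : Set G) ≤ K := (Subgroup.closure_le K).2 hcon
    rw [hgen] at hK
    apply hH.1.1.2
    rw [Set.eq_univ_iff_forall]
    intro x
    have hx : x ∈ H := hK (Subgroup.mem_top x)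
    exact Finset.subset_mul_left H h1 hx
  have hmain : ∀ h ∈ H, ∀ s ∈ S, ∀ t ∈ S, h * (s⁻¹ * t) ∈ S⁻¹ * S := by
    intro h hh s hs t ht
    by_cases hst : s * t⁻¹ ∈ H
    · have hu : h * (s⁻¹ * t) ∈ H := by
        have := hconj s⁻¹ _ (hinv _ hst)
        apply hmul _ hh
        have h2 := hconj s⁻¹ _ hst
        have h3 := hinv _ h2
        have e : (s⁻¹ * (s * t⁻¹) * s⁻¹⁻¹)⁻¹ = s⁻¹ * t := by group
        rwa [e] at h3
      have hp := hpair r hr 1 h1 (by simpa using hrH)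
      have hfix : ∀ v : G, MulOpposite.op (h * (s⁻¹ * t)) • (MulOpposite.op v • H)
          = MulOpposite.op v • H := by
        intro v
        rw [smul_smul, ← MulOpposite.op_mul]
        exact hcos _ _ (hconj v _ hu)
      rcases le_total ((MulOpposite.op r • H) \ S).card ((MulOpposite.op (1:G) • H) \ S).card
        with hle | hle
      · apply aux_cover (MulOpposite.op r • H)
        rw [hfix, Finset.card_smul_finset]; omega
      · apply aux_cover (MulOpposite.op (1:G) • H)
        rw [hfix, Finset.card_smul_finset]; omega
    · have hp := hpair s hs t ht hst
      apply aux_cover (MulOpposite.op s • H)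
      have : MulOpposite.op (h * (s⁻¹ * t)) • (MulOpposite.op s • H)
          = MulOpposite.op t • H := by
        rw [smul_smul, ← MulOpposite.op_mul]
        apply hcos
        have e : s * (h * (s⁻¹ * t)) * t⁻¹ = s * h * s⁻¹ := by group
        rw [e]; exact hconj s h hh
      rw [this, Finset.card_smul_finset]; omega
  constructor
  · apply Finset.Subset.antisymm
    · intro z hz
      obtain ⟨x, hx, y, hy, rfl⟩ := Finset.mem_mul.1 hz
      simpa using hdiv _ (Finset.mem_inv'.1 hx) y hy
    · intro z hz
      exact Finset.mem_mul.2 ⟨1, by simpa using h1H, z, hz, by simp⟩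
  · apply Finset.Subset.antisymm
    · intro z hz
      obtain ⟨h, hh, y, hy, rfl⟩ := Finset.mem_mul.1 hz
      obtain ⟨s, hs, t, ht, rfl⟩ := Finset.mem_mul.1 hy
      simpa using hmain h hh _ (Finset.mem_inv'.1 hs) t ht
    · exact Finset.subset_mul_right _ h1H
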